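/- Let e ∈ H_n(ℍ_ℂ) be such that ê ∈ M_{2n}(ℂ) is a unitary matrix. Then there exists a ℂ-linear bijection T : M_n(ℍ_ℂ) → M_n(ℍ_ℂ) such that: (a) T(x·e*·y) = T(x)·T(y) and T(e·x*·e) = T(x)* for all x, y ∈ M_n(ℍ_ℂ) (that is, T is a *-isomorphism from M_n(ℍ_ℂ) equipped with the product x·_e y = x e* y and the involution x ↦ e x* e onto M_n(ℍ_ℂ) with its standard product and involution); and (b) T(xᵈ) = T(x)ᵈ for all x ∈ M_n(ℍ_ℂ). In particular, T maps H_n(ℍ_ℂ) onto H_n(ℍ_ℂ). -/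

import Mathlib

/-!
Since `ê` is unitary with finite spectrum, interpolating square roots of its eigenvalues gives a
polynomial `p` such that, by the functional calculus, `p(ê)` is unitary with square `ê`. As
`A ↦ Â` is an injective homomorphism of complex `*`-algebras, `u = p(e)` satisfies `u² = e` and
`u* = u⁻¹`. As `ᵈ` is a `ℂ`-linear anti-automorphism fixing `e`, it fixes the polynomial `u` in `e`.
Then `T x = u⁻¹ x u⁻¹` works: for example
`T (x e* y) = u⁻¹ x u⁻¹ u⁻¹ y u⁻¹ = T x T y`, because `e* = u⁻²`.
-/


noncomputable section

open Matrix

/-- The biquaternions `ℍ_ℂ`: quaternions with complex coefficients. -/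
abbrev HC : Type := Quaternion ℂ

/-- The embedding `ℂ ⊆ ℍ_ℂ` as scalar biquaternions. -/
def cq (z : ℂ) : HC := ⟨z, 0, 0, 0⟩

/-- The `ℂ`-linear involution `x ↦ x⋄` (quaternion conjugation). -/
def qdia (x : HC) : HC := ⟨x.re, -x.imI, -x.imJ, -x.imK⟩

/-- Coefficientwise complex conjugation `x ↦ x̄`. -/
def qbar (x : HC) : HC :=
  ⟨starRingEnd ℂ x.re, starRingEnd ℂ x.imI, starRingEnd ℂ x.imJ, starRingEnd ℂ x.imK⟩

/-- The conjugate-linear involution `x* = (x̄)⋄`. -/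
def qstar (x : HC) : HC := qdia (qbar x)

/-- The natural (Euclidean/product) topology on the biquaternions `ℍ_ℂ ≅ ℂ⁴`. -/
instance : TopologicalSpace HC :=
  TopologicalSpace.induced (fun q : HC => (q.re, q.imI, q.imJ, q.imK)) inferInstance

/-- The 2×2 complex matrix `x̂` associated to a biquaternion `x`. -/
def hat (x : HC) : Matrix (Fin 2) (Fin 2) ℂ :=
  !![x.re + Complex.I * x.imI, x.imJ + Complex.I * x.imK;
     -x.imJ + Complex.I * x.imK, x.re - Complex.I * x.imI]

/-- The `2n × 2n` complex matrix `Â` obtained by replacing every biquaternion entry `a`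
of `A` by the 2×2 block `â`. -/
def hatM {n : ℕ} (A : Matrix (Fin n) (Fin n) HC) :
    Matrix (Fin n × Fin 2) (Fin n × Fin 2) ℂ :=
  Matrix.of fun p q => hat (A p.1 q.1) p.2 q.2

/-- `A` is `⋄`-hermitian: `Aᵈ = A`, i.e. `(A j i)⋄ = A i j` for all `i j`.
`H_n(ℍ_ℂ)` is the collection of all such matrices. -/
def IsHerm {n : ℕ} (A : Matrix (Fin n) (Fin n) HC) : Prop :=
  ∀ i j, qdia (A j i) = A i j

/-- The defining properties of the sequence of determinants `(dt_n)_{n ≥ 1}`: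
`D n` plays the role of `dt_{n+1} : H_{n+1}(ℍ_ℂ) → ℍ_ℂ`.
(i) continuity on `H_{n+1}(ℍ_ℂ)`; (ii) `dt₁((x₁₁)) = x₁₁`;
(iii) the inductive formula for `dt_{n+1}` when `x₁₁ ≠ 0`. -/
def IsDtSeq (D : ∀ n : ℕ, Matrix (Fin (n + 1)) (Fin (n + 1)) HC → HC) : Prop :=
  (∀ n : ℕ, ContinuousOn (D n) {A | IsHerm A}) ∧
  (∀ A : Matrix (Fin 1) (Fin 1) HC, IsHerm A → D 0 A = A 0 0) ∧
  (∀ (n : ℕ) (A : Matrix (Fin (n + 2)) (Fin (n + 2)) HC), IsHerm A → A 0 0 ≠ 0 →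
    D (n + 1) A = A 0 0 *
      D n (Matrix.of fun i j : Fin (n + 1) =>
        A i.succ j.succ - Ring.inverse (A 0 0) * A i.succ 0 * A 0 j.succ))

/-- The conjugate transpose `A*` of a matrix of biquaternions
(transpose with `*` applied entrywise). -/
def mstarB {n : ℕ} (A : Matrix (Fin n) (Fin n) HC) : Matrix (Fin n) (Fin n) HC :=
  Matrix.of fun i j => qstar (A j i)

/-- The transpose `Aᵈ` with `⋄` applied entrywise. -/
def mdiaB {n : ℕ} (A : Matrix (Fin n) (Fin n) HC) : Matrix (Fin n) (Fin n) HC :=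
  Matrix.of fun i j => qdia (A j i)

section UnitaryRoots

open Polynomial

lemma exists_polynomial_eval_pow_eq {K : Type*} [Field K] [IsAlgClosed K] (s : Finset K) {k : ℕ}
    (hk : 0 < k) : ∃ p : K[X], ∀ z ∈ s, p.eval z ^ k = z := by
  classical
  choose root root_pow using fun z : K => IsAlgClosed.exists_pow_nat_eq z hk
  refine ⟨Lagrange.interpolate s id root, fun z hz => ?_⟩
  have eval_eq : (Lagrange.interpolate s id root).eval z = root z :=
    Lagrange.eval_interpolate_at_node (v := id) root (Set.injOn_id _) hz
  rw [eval_eq, root_pow]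

lemma mem_unitary_of_pow_mem_unitary {𝕜 : Type*} [RCLike 𝕜] {w : 𝕜} {k : ℕ} (hk : k ≠ 0)
    (h : w ^ k ∈ unitary 𝕜) : w ∈ unitary 𝕜 := by
  have norm_pow_eq : ‖w‖ ^ k = 1 := by rw [← norm_pow, CStarRing.norm_of_mem_unitary h]
  have norm_eq : ‖w‖ = 1 := (pow_eq_one_iff_of_nonneg (norm_nonneg w) hk).1 norm_pow_eq
  rw [Unitary.mem_iff_star_mul_self, RCLike.star_def, RCLike.conj_mul, norm_eq,
    RCLike.ofReal_one, one_pow]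

lemma exists_polynomial_aeval_pow_eq_mem_unitary {A : Type*} [TopologicalSpace A] [Ring A]
    [StarRing A] [Algebra ℂ A] [ContinuousFunctionalCalculus ℂ A IsStarNormal] {a : A}
    (ha : a ∈ unitary A) (hfin : (spectrum ℂ a).Finite) {k : ℕ} (hk : 0 < k) :
    ∃ p : ℂ[X], aeval a p ^ k = a ∧ aeval a p ∈ unitary A := by
  have ha_normal : IsStarNormal a := isStarNormal_of_mem_unitary ha
  obtain ⟨p, hp⟩ := exists_polynomial_eval_pow_eq hfin.toFinset hk
  replace hp : ∀ z ∈ spectrum ℂ a, p.eval z ^ k = z := fun z hz => hp z (hfin.mem_toFinset.2 hz)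
  refine ⟨p, ?_, ?_⟩
  · calc aeval a p ^ k = cfc (fun z => p.eval z ^ k) a := by
          rw [← cfc_polynomial p a, cfc_pow _ k a p.continuous.continuousOn]
      _ = cfc (fun z => z) a := cfc_congr hp
      _ = a := cfc_id' ℂ a
  · rw [← cfc_polynomial p a, cfc_unitary_iff _ a ha_normal p.continuous.continuousOn]
    intro z hz
    have hz_unitary : p.eval z ^ k ∈ unitary ℂ := by
      rw [hp z hz]
      exact spectrum_subset_unitary_of_mem_unitary ha hz
    exact Unitary.mem_iff_star_mul_self.1 (mem_unitary_of_pow_mem_unitary hk.ne' hz_unitary)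

end UnitaryRoots

section Sandwich

variable (R : Type*) {A : Type*} [CommSemiring R] [Semiring A] [Algebra R A]

/-- The two-sided multiplication `x ↦ u x u` by a unit, as a linear automorphism. For `u = w⁻¹` it
turns the product `x w⁻² y` and the unit `w²` into the standard ones. -/
def unitSandwich (u : Aˣ) : A ≃ₗ[R] A :=
  (u.mulLeftLinearEquiv R A).trans (u.mulRightLinearEquiv R)

lemma unitSandwich_apply (u : Aˣ) (x : A) : unitSandwich R u x = u * x * u := rfl

lemma unitSandwich_mul_sq_mul (u : Aˣ) (x y : A) :
    unitSandwich R u (x * (u : A) ^ 2 * y) = unitSandwich R u x * unitSandwich R u y := by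
  simp only [unitSandwich_apply, sq, mul_assoc]

lemma unitSandwich_inv_sq_mul_mul_sq (u : Aˣ) (x : A) :
    unitSandwich R u⁻¹ ((u : A) ^ 2 * x * (u : A) ^ 2) = unitSandwich R u x := by
  simp only [unitSandwich_apply, sq, mul_assoc, Units.inv_mul_cancel_left, Units.mul_inv, mul_one]

end Sandwich

lemma unop_aeval_eq_of_unop_eq {R A : Type*} [CommSemiring R] [Semiring A] [Algebra R A]
    (τ : A →ₐ[R] Aᵐᵒᵖ) {a : A} (ha : (τ a).unop = a) (p : Polynomial R) :
    (τ (Polynomial.aeval a p)).unop = Polynomial.aeval a p := by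
  rw [← Polynomial.aeval_algHom_apply, ← MulOpposite.op_unop (τ a), ha, Polynomial.aeval_op_apply,
    MulOpposite.unop_op]

lemma image_fixedPoints_eq_of_semiconj {α β : Type*} (T : α ≃ β) {f : α → α} {g : β → β}
    (h : Function.Semiconj T f g) : T '' Function.fixedPoints f = Function.fixedPoints g := by
  have h_symm : Function.Semiconj T.symm g f := h.inverse_left T.left_inv T.right_inv
  exact h.mapsTo_fixedPoints.image_subset.antisymm fun y hy =>
    ⟨T.symm y, h_symm.mapsTo_fixedPoints hy, T.apply_symm_apply y⟩

/-- The complex matrices `î`, `ĵ`, `k̂`, which satisfy the quaternion relations. -/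
def hatBasis : QuaternionAlgebra.Basis (Matrix (Fin 2) (Fin 2) ℂ) (-1 : ℂ) 0 (-1) where
  i := !![Complex.I, 0; 0, -Complex.I]
  j := !![0, 1; -1, 0]
  k := !![0, Complex.I; Complex.I, 0]
  i_mul_i := by simp [Matrix.one_fin_two]
  j_mul_j := by simp [Matrix.one_fin_two]
  i_mul_j := by simp
  j_mul_i := by simp

/-- The map `x ↦ x̂` as a homomorphism of complex algebras. -/
def hatAlgHom : HC →ₐ[ℂ] Matrix (Fin 2) (Fin 2) ℂ :=
  hatBasis.liftHom

lemma hatAlgHom_apply (x : HC) : hatAlgHom x = hat x := by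
  change hatBasis.lift x = hat x
  ext i j
  fin_cases i <;> fin_cases j <;>
    simp [hatBasis, hat, QuaternionAlgebra.Basis.lift, Matrix.algebraMap_matrix_apply, mul_comm,
      sub_eq_add_neg]

lemma hat_injective : Function.Injective hat := by
  intro x y h
  have h00 : x.re + Complex.I * x.imI = y.re + Complex.I * y.imI := congrFun₂ h 0 0
  have h01 : x.imJ + Complex.I * x.imK = y.imJ + Complex.I * y.imK := congrFun₂ h 0 1
  have h10 : -x.imJ + Complex.I * x.imK = -y.imJ + Complex.I * y.imK := congrFun₂ h 1 0
  have h11 : x.re - Complex.I * x.imI = y.re - Complex.I * y.imI := congrFun₂ h 1 1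
  ext1
  · linear_combination (h00 + h11) / 2
  · linear_combination -Complex.I * (h00 - h11) / 2 + (x.imI - y.imI) * Complex.I_sq
  · linear_combination (h01 - h10) / 2
  · linear_combination -Complex.I * (h01 + h10) / 2 + (x.imK - y.imK) * Complex.I_sq

lemma hat_qstar (x : HC) : hat (qstar x) = (hat x)ᴴ := by
  ext i j
  fin_cases i <;> fin_cases j <;> simp [hat, qstar, qdia, qbar, sub_eq_add_neg]

lemma qdia_eq_star (x : HC) : qdia x = star x := by
  ext <;> simp [qdia]

lemma qdia_qstar (x : HC) : qdia (qstar x) = qstar (qdia x) := by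
  ext <;> simp [qstar, qdia, qbar]

section Matrices

variable {n : ℕ}

/-- The map `A ↦ Â` as a homomorphism of complex algebras. -/
def hatMAlgHom (n : ℕ) :
    Matrix (Fin n) (Fin n) HC →ₐ[ℂ] Matrix (Fin n × Fin 2) (Fin n × Fin 2) ℂ :=
  (Matrix.compAlgEquiv (Fin n) (Fin 2) ℂ ℂ).toAlgHom.comp hatAlgHom.mapMatrix

lemma hatMAlgHom_apply (A : Matrix (Fin n) (Fin n) HC) : hatMAlgHom n A = hatM A := by
  ext p q
  exact congrFun₂ (hatAlgHom_apply (A p.1 q.1)) p.2 q.2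

lemma hatM_mul (A B : Matrix (Fin n) (Fin n) HC) : hatM (A * B) = hatM A * hatM B := by
  simp only [← hatMAlgHom_apply, map_mul]

lemma hatM_one : hatM (1 : Matrix (Fin n) (Fin n) HC) = 1 := by
  rw [← hatMAlgHom_apply, map_one]

lemma hatM_aeval (A : Matrix (Fin n) (Fin n) HC) (p : Polynomial ℂ) :
    hatM (Polynomial.aeval A p) = Polynomial.aeval (hatM A) p := by
  simp only [← hatMAlgHom_apply, Polynomial.aeval_algHom_apply]

lemma hatM_mstarB (A : Matrix (Fin n) (Fin n) HC) : hatM (mstarB A) = (hatM A)ᴴ := by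
  ext p q
  exact congrFun₂ (hat_qstar (A q.1 p.1)) p.2 q.2

lemma hatM_injective : Function.Injective (hatM (n := n)) := by
  intro A B h
  ext1 i j
  refine hat_injective ?_
  ext a b
  exact congrFun₂ h (i, a) (j, b)

lemma mstarB_mul (A B : Matrix (Fin n) (Fin n) HC) : mstarB (A * B) = mstarB B * mstarB A :=
  hatM_injective (by simp only [hatM_mul, hatM_mstarB, Matrix.conjTranspose_mul])

lemma mstarB_mstarB (A : Matrix (Fin n) (Fin n) HC) : mstarB (mstarB A) = A :=
  hatM_injective (by simp only [hatM_mstarB, Matrix.conjTranspose_conjTranspose])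

lemma hatM_mem_unitary_iff {A : Matrix (Fin n) (Fin n) HC} :
    hatM A ∈ unitary (Matrix (Fin n × Fin 2) (Fin n × Fin 2) ℂ) ↔
      mstarB A * A = 1 ∧ A * mstarB A = 1 := by
  simp only [Unitary.mem_iff, Matrix.star_eq_conjTranspose, ← hatM_mstarB, ← hatM_mul, ← hatM_one,
    hatM_injective.eq_iff]

/-- The map `A ↦ Aᵈ` as an isomorphism onto the opposite algebra. Mathlib's `star` on
`Quaternion ℂ` is the `ℂ`-linear involution `⋄`, not `*`. -/
def mdiaAlgEquiv (n : ℕ) :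
    Matrix (Fin n) (Fin n) HC ≃ₐ[ℂ] (Matrix (Fin n) (Fin n) HC)ᵐᵒᵖ :=
  Quaternion.starAe.mapMatrix.trans AlgEquiv.mopMatrix

lemma unop_mdiaAlgEquiv_apply (A : Matrix (Fin n) (Fin n) HC) :
    (mdiaAlgEquiv n A).unop = mdiaB A := by
  ext1 i j
  exact (qdia_eq_star (A j i)).symm

lemma mdiaB_mul (A B : Matrix (Fin n) (Fin n) HC) : mdiaB (A * B) = mdiaB B * mdiaB A := by
  simp only [← unop_mdiaAlgEquiv_apply, map_mul, MulOpposite.unop_mul]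

lemma mdiaB_mstarB (A : Matrix (Fin n) (Fin n) HC) : mdiaB (mstarB A) = mstarB (mdiaB A) := by
  ext1 i j
  exact qdia_qstar (A i j)

lemma isHerm_iff_mdiaB_eq {A : Matrix (Fin n) (Fin n) HC} : IsHerm A ↔ mdiaB A = A :=
  Matrix.ext_iff

lemma setOf_isHerm_eq_fixedPoints :
    {A : Matrix (Fin n) (Fin n) HC | IsHerm A} = Function.fixedPoints mdiaB :=
  Set.ext fun _ => isHerm_iff_mdiaB_eq

lemma isHerm_mstarB {A : Matrix (Fin n) (Fin n) HC} (hA : IsHerm A) : IsHerm (mstarB A) := by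
  rw [isHerm_iff_mdiaB_eq] at hA ⊢
  rw [mdiaB_mstarB, hA]

lemma IsHerm.aeval {A : Matrix (Fin n) (Fin n) HC} (hA : IsHerm A) (p : Polynomial ℂ) :
    IsHerm (Polynomial.aeval A p) := by
  rw [isHerm_iff_mdiaB_eq, ← unop_mdiaAlgEquiv_apply] at hA ⊢
  exact unop_aeval_eq_of_unop_eq (mdiaAlgEquiv n).toAlgHom hA p

open scoped Matrix.Norms.L2Operator in
lemma IsHerm.exists_units_sq_eq {e : Matrix (Fin n) (Fin n) HC} (he : IsHerm e)
    (he_unitary : hatM e ∈ unitary (Matrix (Fin n × Fin 2) (Fin n × Fin 2) ℂ)) :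
    ∃ u : (Matrix (Fin n) (Fin n) HC)ˣ, (u : Matrix (Fin n) (Fin n) HC) ^ 2 = e ∧
      mstarB (u : Matrix (Fin n) (Fin n) HC) = ↑u⁻¹ ∧ IsHerm (u : Matrix (Fin n) (Fin n) HC) := by
  obtain ⟨p, hp_sq, hp_unitary⟩ := exists_polynomial_aeval_pow_eq_mem_unitary he_unitary
    (Matrix.finite_spectrum (hatM e)) two_pos
  rw [← hatM_aeval] at hp_sq hp_unitary
  obtain ⟨star_mul_self, mul_star_self⟩ := hatM_mem_unitary_iff.1 hp_unitary
  refine ⟨⟨Polynomial.aeval e p, _, mul_star_self, star_mul_self⟩, hatM_injective ?_, rfl,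
    he.aeval p⟩
  rw [← hp_sq, sq, sq, hatM_mul]

variable {u : (Matrix (Fin n) (Fin n) HC)ˣ}

lemma mstarB_unitSandwich_inv (hu : mstarB (u : Matrix (Fin n) (Fin n) HC) = ↑u⁻¹)
    (x : Matrix (Fin n) (Fin n) HC) :
    mstarB (unitSandwich ℂ u⁻¹ x) = unitSandwich ℂ u (mstarB x) := by
  have hu_inv : mstarB (↑u⁻¹ : Matrix (Fin n) (Fin n) HC) = u := by rw [← hu, mstarB_mstarB]
  simp only [unitSandwich_apply, mstarB_mul, hu_inv, mul_assoc]

lemma mdiaB_unitSandwich (hu : IsHerm (u : Matrix (Fin n) (Fin n) HC))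
    (x : Matrix (Fin n) (Fin n) HC) :
    mdiaB (unitSandwich ℂ u x) = unitSandwich ℂ u (mdiaB x) := by
  simp only [unitSandwich_apply, mdiaB_mul, isHerm_iff_mdiaB_eq.1 hu, mul_assoc]

end Matrices

/-- Let `e ∈ H_n(ℍ_ℂ)` with `ê` a unitary complex matrix. Then there is a
`ℂ`-linear bijection `T` of `M_n(ℍ_ℂ)` which is a `*`-isomorphism from `M_n(ℍ_ℂ)` with product
`x ·_e y = x e* y` and involution `x ↦ e x* e` onto `M_n(ℍ_ℂ)` with its standard structure,
and which commutes with `ᵈ`; in particular `T` maps `H_n(ℍ_ℂ)` onto `H_n(ℍ_ℂ)`. -/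
theorem statement5 (n : ℕ) (e : Matrix (Fin (n + 1)) (Fin (n + 1)) HC)
    (he : IsHerm e)
    (heu₁ : (hatM e)ᴴ * hatM e = 1) (heu₂ : hatM e * (hatM e)ᴴ = 1) :
    ∃ T : Matrix (Fin (n + 1)) (Fin (n + 1)) HC ≃ₗ[ℂ]
        Matrix (Fin (n + 1)) (Fin (n + 1)) HC,
      (∀ x y : Matrix (Fin (n + 1)) (Fin (n + 1)) HC,
        T (x * mstarB e * y) = T x * T y) ∧
      (∀ x : Matrix (Fin (n + 1)) (Fin (n + 1)) HC,
        T (e * mstarB x * e) = mstarB (T x)) ∧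
      (∀ x : Matrix (Fin (n + 1)) (Fin (n + 1)) HC,
        T (mdiaB x) = mdiaB (T x)) ∧
      (⇑T) '' {A | IsHerm A} = {A | IsHerm A} := by
  obtain ⟨u, rfl, hu_star, hu_herm⟩ := he.exists_units_sq_eq ⟨heu₁, heu₂⟩
  have hu_inv_herm : IsHerm (↑u⁻¹ : Matrix (Fin (n + 1)) (Fin (n + 1)) HC) :=
    hu_star ▸ isHerm_mstarB hu_herm
  have h_dia : ∀ x, unitSandwich ℂ u⁻¹ (mdiaB x) = mdiaB (unitSandwich ℂ u⁻¹ x) := fun x =>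
    (mdiaB_unitSandwich hu_inv_herm x).symm
  refine ⟨unitSandwich ℂ u⁻¹, fun x y => ?_, fun x => ?_, h_dia, ?_⟩
  · rw [sq, mstarB_mul, hu_star, ← sq, unitSandwich_mul_sq_mul]
  · rw [unitSandwich_inv_sq_mul_mul_sq, mstarB_unitSandwich_inv hu_star]
  · rw [setOf_isHerm_eq_fixedPoints]
    exact image_fixedPoints_eq_of_semiconj (unitSandwich ℂ u⁻¹).toEquiv h_dia
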